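/- arXiv:1103.4674 — 8 statements merged into one kernel-verified Lean document; each statement's English description precedes it below -/
import Mathlib

section
/- For all real numbers x, y, z, the function x ↦ D(x, y, z) is differentiable at every x, and its derivative with respect to x equals H(y+z, x). That is, ∂D/∂x(x, y, z) = 1/(1 + exp((y+z+x)/2)) + 1/(1 + exp((y+z−x)/2)). -/
open Real

/-- Mirzakhani's kernel H(x, y). -/
noncomputable def H (x y : ℝ) : ℝ :=
  1 / (1 + Real.exp ((x + y) / 2)) + 1 / (1 + Real.exp ((x - y) / 2))

/-- The function D(x, y, z) from the generalised McShane identity. -/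
noncomputable def D (x y z : ℝ) : ℝ :=
  2 * Real.log ((Real.exp (x / 2) + Real.exp ((y + z) / 2)) /
      (Real.exp (-x / 2) + Real.exp ((y + z) / 2)))

theorem deriv_D (x y z : ℝ) :
    HasDerivAt (fun x => D x y z) (H (y + z) x) x := by
  have hA : HasDerivAt (fun x : ℝ => Real.exp (x / 2) + Real.exp ((y + z) / 2))
      (Real.exp (x / 2) * (1 / 2)) x :=
    (((hasDerivAt_id x).div_const 2).exp).add_const _
  have hB : HasDerivAt (fun x : ℝ => Real.exp (-x / 2) + Real.exp ((y + z) / 2))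
      (Real.exp (-x / 2) * (-1 / 2)) x :=
    ((((hasDerivAt_id x).neg).div_const 2).exp).add_const _
  have pA : ∀ t : ℝ, 0 < Real.exp (t / 2) + Real.exp ((y + z) / 2) := fun t => by positivity
  have pB : ∀ t : ℝ, 0 < Real.exp (-t / 2) + Real.exp ((y + z) / 2) := fun t => by positivity
  have hf : (fun x => D x y z) = fun x : ℝ =>
      2 * (Real.log (Real.exp (x / 2) + Real.exp ((y + z) / 2)) -
        Real.log (Real.exp (-x / 2) + Real.exp ((y + z) / 2))) := by
    funext t
    simp only [D]
    rw [Real.log_div (pA t).ne' (pB t).ne']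
  rw [hf]
  have h := ((hA.log (pA x).ne').sub (hB.log (pB x).ne')).const_mul 2
  refine h.congr_deriv ?_
  have e1 : Real.exp (-x / 2) = (Real.exp (x / 2))⁻¹ := by
    rw [← Real.exp_neg]; congr 1; ring
  have e2 : Real.exp ((y + z + x) / 2) = Real.exp ((y + z) / 2) * Real.exp (x / 2) := by
    rw [← Real.exp_add]; congr 1; ring
  have e3 : Real.exp ((y + z - x) / 2) = Real.exp ((y + z) / 2) / Real.exp (x / 2) := by
    rw [← Real.exp_sub]; congr 1; ring
  simp only [H]
  rw [e1, e2, e3]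
  have ha := Real.exp_pos (x / 2)
  have hc := Real.exp_pos ((y + z) / 2)
  generalize Real.exp (x / 2) = a at *
  generalize Real.exp ((y + z) / 2) = c at *
  have h1 : a + c ≠ 0 := by positivity
  have h2 : 1 + c * a ≠ 0 := by positivity
  have h3 : a⁻¹ + c = (1 + c * a) / a := by field_simp
  have h4 : 1 + c / a = (a + c) / a := by field_simp
  rw [h3, h4]
  field_simp
  ring
end

section
/- For all real numbers x, y, z, the function x ↦ R(x, y, z) is differentiable at every x, and its derivative with respect to x equals (1/2)·(H(z, x+y) + H(z, x−y)). -/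
open Real

/-- The function R(x, y, z) from the generalised McShane identity. -/
noncomputable def R (x y z : ℝ) : ℝ :=
  x - Real.log ((Real.cosh (y / 2) + Real.cosh ((x + z) / 2)) /
      (Real.cosh (y / 2) + Real.cosh ((x - z) / 2)))

theorem aux_sinh_div (p q : ℝ) :
    Real.sinh p / (Real.cosh q + Real.cosh p) =
      1 - 1 / (1 + Real.exp (p + q)) - 1 / (1 + Real.exp (p - q)) := by
  rw [Real.sinh_eq, Real.cosh_eq, Real.cosh_eq, Real.exp_add, Real.exp_sub, Real.exp_neg,
    Real.exp_neg]
  have hu := Real.exp_pos p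
  have hv := Real.exp_pos q
  generalize Real.exp p = u at *
  generalize Real.exp q = v at *
  have h1 : (v + v⁻¹) / 2 + (u + u⁻¹) / 2 = (1 + u * v) * (v + u) / (2 * u * v) := by
    field_simp
    ring
  have h2 : 1 + u / v = (v + u) / v := by field_simp
  have h3 : 1 + u * v ≠ 0 := by positivity
  have h4 : v + u ≠ 0 := by positivity
  rw [h1, h2]
  field_simp
  ring

theorem deriv_R (x y z : ℝ) :
    HasDerivAt (fun x => R x y z) ((1 / 2) * (H z (x + y) + H z (x - y))) x := by
  have hN : 0 < Real.cosh (y / 2) + Real.cosh ((x + z) / 2) :=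
    add_pos (Real.cosh_pos _) (Real.cosh_pos _)
  have hD : 0 < Real.cosh (y / 2) + Real.cosh ((x - z) / 2) :=
    add_pos (Real.cosh_pos _) (Real.cosh_pos _)
  have dN : HasDerivAt (fun x : ℝ => Real.cosh (y / 2) + Real.cosh ((x + z) / 2))
      (Real.sinh ((x + z) / 2) * (1 / 2)) x :=
    ((((hasDerivAt_id x).add_const z).div_const 2).cosh).const_add _
  have dD : HasDerivAt (fun x : ℝ => Real.cosh (y / 2) + Real.cosh ((x - z) / 2))
      (Real.sinh ((x - z) / 2) * (1 / 2)) x :=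
    ((((hasDerivAt_id x).sub_const z).div_const 2).cosh).const_add _
  have e : (fun x => R x y z) = fun x : ℝ =>
      x - (Real.log (Real.cosh (y / 2) + Real.cosh ((x + z) / 2)) -
        Real.log (Real.cosh (y / 2) + Real.cosh ((x - z) / 2))) := by
    funext t
    unfold R
    rw [Real.log_div (add_pos (Real.cosh_pos _) (Real.cosh_pos _)).ne'
      (add_pos (Real.cosh_pos _) (Real.cosh_pos _)).ne']
  rw [e]
  have d := (hasDerivAt_id x).sub ((dN.log hN.ne').sub (dD.log hD.ne'))
  refine HasDerivAt.congr_deriv d ?_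
  have k1 := aux_sinh_div ((x + z) / 2) (y / 2)
  have k2 := aux_sinh_div (-((x - z) / 2)) (y / 2)
  rw [Real.sinh_neg, Real.cosh_neg, neg_div] at k2
  unfold H
  rw [show (z + (x + y)) / 2 = (x + z) / 2 + y / 2 by ring,
    show (z - (x + y)) / 2 = -((x - z) / 2) - y / 2 by ring,
    show (z + (x - y)) / 2 = (x + z) / 2 - y / 2 by ring,
    show (z - (x - y)) / 2 = -((x - z) / 2) + y / 2 by ring,
    mul_div_right_comm, mul_div_right_comm]
  linarith
end

section
/- For all real numbers x, y, z one has the integral representation D(x, y, z) = ∫₀ˣ H(y+z, s) ds. -/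
open Real

theorem D_eq_integral (x y z : ℝ) :
    D x y z = ∫ s in (0 : ℝ)..x, H (y + z) s := by
  have hd : ∀ s ∈ Set.uIcc (0 : ℝ) x, HasDerivAt (fun s : ℝ =>
      2 * Real.log (Real.exp (s / 2) + Real.exp ((y + z) / 2)) -
      2 * Real.log (Real.exp (-s / 2) + Real.exp ((y + z) / 2))) (H (y + z) s) s := by
    intro s _
    have hp : Real.exp (s / 2) + Real.exp ((y + z) / 2) ≠ 0 := by positivity
    have hq : Real.exp (-s / 2) + Real.exp ((y + z) / 2) ≠ 0 := by positivity
    have h1 := (((((hasDerivAt_id' s).div_const 2).exp).add_const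
      (Real.exp ((y + z) / 2))).log hp).const_mul 2
    have h2 := (((((hasDerivAt_neg' s).div_const 2).exp).add_const
      (Real.exp ((y + z) / 2))).log hq).const_mul 2
    refine (h1.sub h2).congr_deriv ?_
    have e1 : Real.exp ((y + z + s) / 2) = Real.exp ((y + z) / 2) * Real.exp (s / 2) := by
      rw [← Real.exp_add]; ring_nf
    have e2 : Real.exp ((y + z - s) / 2) = Real.exp ((y + z) / 2) / Real.exp (s / 2) := by
      rw [← Real.exp_sub]; ring_nf
    have e3 : Real.exp (-s / 2) = (Real.exp (s / 2))⁻¹ := by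
      rw [← Real.exp_neg]; ring_nf
    unfold H
    rw [e1, e2, e3]
    have ha := Real.exp_pos ((y + z) / 2)
    have hb := Real.exp_pos (s / 2)
    generalize Real.exp ((y + z) / 2) = a at ha ⊢
    generalize Real.exp (s / 2) = b at hb ⊢
    have k1 : 1 + a * b ≠ 0 := by positivity
    have k2 : 1 + a / b ≠ 0 := by positivity
    have k3 : b + a ≠ 0 := by positivity
    have k4 : b⁻¹ + a ≠ 0 := by positivity
    have t1 : 1 / (1 + a / b) = b / (b + a) := by field_simp
    have t2 : b⁻¹ / (b⁻¹ + a) = 1 / (1 + a * b) := by field_simp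
    rw [t1, ← t2]
    ring
  have hc : Continuous (fun s => H (y + z) s) := by
    unfold H
    refine Continuous.add ?_ ?_ <;>
    · refine Continuous.div (by fun_prop) (by fun_prop) (fun s => ?_)
      positivity
  rw [intervalIntegral.integral_eq_sub_of_hasDerivAt hd (hc.intervalIntegrable _ _)]
  unfold D
  rw [Real.log_div (by positivity) (by positivity)]
  simp
  ring
end

section
/- For all real numbers x, y, z one has the integral representation R(x, y, z) = (1/2)·∫₀ˣ (H(z, s+y) + H(z, s−y)) ds. -/
open Real

lemma aux_sinh (a b : ℝ) : Real.sinh a / (Real.cosh b + Real.cosh a) =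
    1 - 1 / (1 + Real.exp (a + b)) - 1 / (1 + Real.exp (a - b)) := by
  rw [Real.sinh_eq, Real.cosh_eq, Real.cosh_eq, Real.exp_add, Real.exp_sub, Real.exp_neg,
    Real.exp_neg]
  have hA := Real.exp_pos a
  have hB := Real.exp_pos b
  generalize Real.exp a = A at *
  generalize Real.exp b = B at *
  have h1 : (B + B⁻¹) / 2 + (A + A⁻¹) / 2 = (1 + A * B) * (B + A) / (2 * A * B) := by
    field_simp
    ring
  have h2 : 1 + A / B = (B + A) / B := by field_simp
  have h3 : 1 + A * B ≠ 0 := by positivity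
  have h4 : B + A ≠ 0 := by positivity
  rw [h1, h2]
  field_simp
  ring

lemma aux_deriv (y z s : ℝ) : HasDerivAt (fun x => 2 * (x -
    (Real.log (Real.cosh (y / 2) + Real.cosh ((x + z) / 2)) -
      Real.log (Real.cosh (y / 2) + Real.cosh ((x - z) / 2)))))
    (H z (s + y) + H z (s - y)) s := by
  have hp : ∀ u, Real.cosh (y / 2) + Real.cosh u ≠ 0 := fun u =>
    (add_pos (Real.cosh_pos _) (Real.cosh_pos _)).ne'
  have d1 : HasDerivAt (fun x : ℝ => (x + z) / 2) (1 / 2) s :=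
    ((hasDerivAt_id s).add_const z).div_const 2
  have d2 : HasDerivAt (fun x : ℝ => (x - z) / 2) (1 / 2) s :=
    ((hasDerivAt_id s).sub_const z).div_const 2
  have e1 := (d1.cosh.const_add (Real.cosh (y / 2))).log (hp _)
  have e2 := (d2.cosh.const_add (Real.cosh (y / 2))).log (hp _)
  have e := ((hasDerivAt_id s).sub (e1.sub e2)).const_mul 2
  refine e.congr_deriv ?_
  have k1 := aux_sinh ((s + z) / 2) (y / 2)
  have k2 := aux_sinh (-((s - z) / 2)) (y / 2)
  rw [Real.sinh_neg, Real.cosh_neg, neg_div] at k2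
  rw [mul_div_right_comm, mul_div_right_comm, k1, ← neg_neg (Real.sinh ((s - z) / 2) / _), k2]
  unfold H
  rw [show (z + (s + y)) / 2 = (s + z) / 2 + y / 2 by ring,
    show (z - (s + y)) / 2 = -((s - z) / 2) - y / 2 by ring,
    show (z + (s - y)) / 2 = (s + z) / 2 - y / 2 by ring,
    show (z - (s - y)) / 2 = -((s - z) / 2) + y / 2 by ring]
  ring

theorem R_eq_integral (x y z : ℝ) :
    R x y z = (1 / 2) * ∫ s in (0 : ℝ)..x, (H z (s + y) + H z (s - y)) := by
  have hp : ∀ u, Real.cosh (y / 2) + Real.cosh u ≠ 0 := fun u =>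
    (add_pos (Real.cosh_pos _) (Real.cosh_pos _)).ne'
  have hc : Continuous fun s => H z (s + y) + H z (s - y) := by
    have h : ∀ u : ℝ, 1 + Real.exp u ≠ 0 := fun u => by positivity
    unfold H
    fun_prop (disch := intros; apply h)
  rw [intervalIntegral.integral_eq_sub_of_hasDerivAt (fun s _ => aux_deriv y z s)
    (hc.intervalIntegrable _ _)]
  unfold R
  rw [Real.log_div (hp _) (hp _), show (0 - z) / 2 = -((0 + z) / 2) by ring, Real.cosh_neg]
  ring
end

section
/- For all fixed real numbers y and z, the limit as x tends to 0 from above of R(x, y, z)/x equals H(z, y) = 1/(1 + exp((z+y)/2)) + 1/(1 + exp((z−y)/2)). -/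
open Real Filter Topology

theorem R_div_tendsto (y z : ℝ) :
    Tendsto (fun x => R x y z / x) (𝓝[>] (0 : ℝ)) (𝓝 (H z y)) := by
  have hpos : ∀ t : ℝ, 0 < Real.cosh (y / 2) + Real.cosh t := fun t =>
    add_pos (Real.cosh_pos _) (Real.cosh_pos _)
  have h1 : HasDerivAt (fun x : ℝ => Real.cosh (y / 2) + Real.cosh ((x + z) / 2))
      (Real.sinh (((0:ℝ) + z) / 2) * (1 / 2)) 0 :=
    ((((hasDerivAt_id (0:ℝ)).add_const z).div_const 2).cosh).const_add _
  have h2 : HasDerivAt (fun x : ℝ => Real.cosh (y / 2) + Real.cosh ((x - z) / 2))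
      (Real.sinh (((0:ℝ) - z) / 2) * (1 / 2)) 0 :=
    ((((hasDerivAt_id (0:ℝ)).sub_const z).div_const 2).cosh).const_add _
  have h3 := (hasDerivAt_id (0:ℝ)).sub
    ((h1.log (hpos _).ne').sub (h2.log (hpos _).ne'))
  have hz : ((0:ℝ) - z) / 2 = -(z / 2) := by ring
  have h4 : HasDerivAt (fun x => R x y z) (H z y) 0 := by
    refine (h3.congr_of_eventuallyEq (Eventually.of_forall fun x => ?_)).congr_deriv (Eq.symm ?_)
    · simp only [R, Pi.sub_apply, id]
      rw [Real.log_div (hpos _).ne' (hpos _).ne']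
    · have e1 : Real.exp ((z + y) / 2) = Real.exp (z / 2) * Real.exp (y / 2) := by
        rw [← Real.exp_add]; ring_nf
      have e2 : Real.exp ((z - y) / 2) = Real.exp (z / 2) / Real.exp (y / 2) := by
        rw [← Real.exp_sub]; ring_nf
      rw [hz, zero_add, Real.sinh_neg, Real.cosh_neg, H, e1, e2]
      simp only [Real.cosh_eq, Real.sinh_eq, Real.exp_neg]
      have ha := Real.exp_pos (z / 2)
      have hb := Real.exp_pos (y / 2)
      generalize Real.exp (z / 2) = a at *
      generalize Real.exp (y / 2) = b at *
      have k1 : 1 + a * b ≠ 0 := by positivity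
      have k2 : b + a ≠ 0 := by positivity
      have k3 : (b + b⁻¹) / 2 + (a + a⁻¹) / 2 = (1 + a * b) * (b + a) / (2 * a * b) := by
        field_simp
        ring
      have k4 : 1 + a / b = (b + a) / b := by field_simp
      rw [k3, k4]
      field_simp
      ring
  have h5 := (hasDerivAt_iff_tendsto_slope.1 h4).mono_left
    (nhdsWithin_mono (0:ℝ) (fun x (hx : 0 < x) => hx.ne' : Set.Ioi (0:ℝ) ⊆ {0}ᶜ))
  refine h5.congr (fun x => ?_)
  have h0 : R 0 y z = 0 := by
    rw [R, hz, zero_add, Real.cosh_neg, div_self (hpos _).ne']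
    simp
  rw [slope_def_field, h0, sub_zero, sub_zero]
end

section
/- For every real number t, the function x ↦ x·H(x, t) is integrable on (0, ∞) and ∫₀^∞ x H(x, t) dx = t²/2 + 2π²/3. -/
open Real MeasureTheory

lemma alt_sum_aux :
    HasSum (fun n : ℕ => (-1 : ℝ) ^ n * (4 / ((n : ℝ) + 1) ^ 2)) (π ^ 2 / 3) := by
  have Z := hasSum_zeta_two
  have h1 : HasSum (fun n : ℕ => if Even n then (1 : ℝ) / (n : ℝ) ^ 2 else 0)
      (1 / 4 * (π ^ 2 / 6) + 0) := by
    apply HasSum.even_add_odd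
    · have e : (fun k : ℕ => if Even (2 * k) then (1 : ℝ) / ((2 * k : ℕ) : ℝ) ^ 2 else 0) =
          fun k : ℕ => 1 / 4 * (1 / (k : ℝ) ^ 2) := by
        funext k
        rw [if_pos (even_two_mul k)]
        push_cast
        rw [mul_pow, one_div, one_div, mul_inv]
        norm_num
      rw [e]
      exact Z.mul_left (1 / 4)
    · have e : (fun k : ℕ => if Even (2 * k + 1) then (1 : ℝ) / ((2 * k + 1 : ℕ) : ℝ) ^ 2
          else 0) = fun _ : ℕ => 0 := by
        funext k
        rw [if_neg (by simp)]
      rw [e]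
      exact hasSum_zero
  have h2 := (Z.sub (h1.mul_left 2)).mul_left 4
  rw [← hasSum_nat_add_iff' 1] at h2
  convert! h2 using 1
  · funext n
    rcases Nat.even_or_odd n with hn | hn
    · have : ¬ Even (n + 1) := by
        simpa [Nat.even_add_one] using hn
      simp only [this, hn.neg_one_pow, if_false]
      push_cast
      ring
    · have : Even (n + 1) := by
        simpa [Nat.even_add_one] using hn
      simp only [this, hn.neg_one_pow, if_true]
      push_cast
      ring
  · simp
    ring

lemma int_term_aux (n : ℕ) :
    IntegrableOn (fun v : ℝ => v * rexp (-(((n : ℝ) + 1) / 2 * v))) (Set.Ioi 0) := by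
  have h := integrableOn_rpow_mul_exp_neg_mul_rpow (p := 1) (s := 1) (b := ((n : ℝ) + 1) / 2)
    (by norm_num) (by norm_num) (by positivity)
  simpa [neg_mul] using h

lemma integral_term_aux (n : ℕ) :
    ∫ v in Set.Ioi (0 : ℝ), v * rexp (-(((n : ℝ) + 1) / 2 * v)) = 4 / ((n : ℝ) + 1) ^ 2 := by
  have h := Real.integral_rpow_mul_exp_neg_mul_Ioi (a := 2) (r := ((n : ℝ) + 1) / 2)
    (by norm_num) (by positivity)
  have e : (2 : ℝ) - 1 = 1 := by norm_num
  simp only [e, Real.rpow_one, Real.Gamma_two, Real.rpow_two] at h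
  rw [h]
  field_simp
  norm_num

lemma cont_g_aux : Continuous (fun v : ℝ => 1 / (1 + rexp (v / 2))) := by
  apply Continuous.div continuous_const (by fun_prop)
  intro x
  positivity

lemma g_le_aux (v : ℝ) : 1 / (1 + rexp (v / 2)) ≤ rexp (-(1 / 2) * v) := by
  have : -(1 / 2) * v = -(v / 2) := by ring
  rw [this, Real.exp_neg, one_div]
  apply inv_anti₀ (Real.exp_pos _)
  linarith

lemma int_g_aux (c a : ℝ) :
    IntegrableOn (fun v : ℝ => (v + c) * (1 / (1 + rexp (v / 2)))) (Set.Ioi a) := by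
  have hc : Continuous (fun v : ℝ => (v + c) * (1 / (1 + rexp (v / 2)))) :=
    (by fun_prop : Continuous fun v : ℝ => v + c).mul cont_g_aux
  have h0 : IntegrableOn (fun v : ℝ => (v + c) * (1 / (1 + rexp (v / 2)))) (Set.Ioi 0) := by
    have h1 := (int_term_aux 0)
    have h2 : IntegrableOn (fun v : ℝ => |c| * rexp (-(1 / 2) * v)) (Set.Ioi 0) :=
      (integrableOn_exp_mul_Ioi (by norm_num) 0).const_mul _
    refine Integrable.mono' (h1.add h2) hc.aestronglyMeasurable ?_
    filter_upwards [ae_restrict_mem measurableSet_Ioi] with v hv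
    have hv : 0 < v := hv
    have hg := g_le_aux v
    have hp : 0 < 1 / (1 + rexp (v / 2)) := by positivity
    have e : -(((0 : ℕ) : ℝ) + 1) / 2 * v = -(1 / 2) * v := by push_cast; ring
    simp only [Pi.add_apply]
    rw [show -((((0 : ℕ) : ℝ) + 1) / 2 * v) = -(1 / 2) * v by push_cast; ring, ← add_mul,
      norm_mul, Real.norm_of_nonneg hp.le]
    apply mul_le_mul _ hg hp.le (by positivity)
    rw [Real.norm_eq_abs]
    exact (abs_add_le v c).trans (by rw [abs_of_pos hv])
  refine IntegrableOn.mono_set ((hc.continuousOn.integrableOn_Icc (a := a) (b := 0)).union h0) ?_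
  intro x hx
  rcases le_or_gt x 0 with h | h
  · exact Or.inl ⟨le_of_lt hx, h⟩
  · exact Or.inr h

lemma base_aux : ∫ v in Set.Ioi (0 : ℝ), v * (1 / (1 + rexp (v / 2))) = π ^ 2 / 3 := by
  have hs := alt_sum_aux
  have h := hasSum_integral_of_summable_integral_norm (μ := volume.restrict (Set.Ioi (0 : ℝ)))
    (F := fun (n : ℕ) (v : ℝ) => (-1 : ℝ) ^ n * (v * rexp (-(((n : ℝ) + 1) / 2 * v))))
    (fun n => (int_term_aux n).const_mul _) ?_
  · simp only [integral_const_mul, integral_term_aux] at h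
    rw [← h.unique hs]
    apply setIntegral_congr_fun measurableSet_Ioi
    intro v hv
    have hv : 0 < v := hv
    have hlt : rexp (-(v / 2)) < 1 := by
      rw [Real.exp_lt_one_iff]
      linarith
    have hg := (hasSum_geometric_of_abs_lt_one (r := -rexp (-(v / 2)))
      (by rw [abs_neg, abs_of_pos (Real.exp_pos _)]; exact hlt)).mul_left (v * rexp (-(v / 2)))
    have e : (fun n : ℕ => (-1 : ℝ) ^ n * (v * rexp (-(((n : ℝ) + 1) / 2 * v)))) =
        fun n : ℕ => v * rexp (-(v / 2)) * (-rexp (-(v / 2))) ^ n := by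
      funext n
      rw [neg_pow (rexp _), ← Real.exp_nat_mul,
        show -(((n : ℝ) + 1) / 2 * v) = -(v / 2) + n * -(v / 2) by ring, Real.exp_add]
      ring
    simp only [e, hg.tsum_eq]
    rw [Real.exp_neg]
    have := Real.exp_pos (v / 2)
    rw [sub_neg_eq_add]
    field_simp
    ring
  · have e : (fun n : ℕ => ∫ v in Set.Ioi (0 : ℝ),
        ‖(-1 : ℝ) ^ n * (v * rexp (-(((n : ℝ) + 1) / 2 * v)))‖) =
        fun n : ℕ => |(-1 : ℝ) ^ n * (4 / ((n : ℝ) + 1) ^ 2)| := by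
      funext n
      rw [abs_mul, abs_pow, abs_neg, abs_one, one_pow, one_mul,
        abs_of_nonneg (by positivity : 0 ≤ 4 / ((n : ℝ) + 1) ^ 2), ← integral_term_aux]
      apply setIntegral_congr_fun measurableSet_Ioi
      intro v hv
      have hv : 0 < v := hv
      simp only [norm_mul, norm_pow, norm_neg, norm_one, one_pow, one_mul, Real.norm_eq_abs,
        abs_of_pos hv, Real.abs_exp]
    simp only [e]
    exact hs.summable.abs

lemma shift_aux (s : ℝ) :
    IntegrableOn (fun x : ℝ => x * (1 / (1 + rexp ((x + s) / 2)))) (Set.Ioi 0) ∧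
    ∫ x in Set.Ioi (0 : ℝ), x * (1 / (1 + rexp ((x + s) / 2))) =
      ∫ v in Set.Ioi s, (v + -s) * (1 / (1 + rexp (v / 2))) := by
  have mp : MeasurePreserving (fun x : ℝ => x + s) volume volume :=
    measurePreserving_add_right volume s
  have me : MeasurableEmbedding (fun x : ℝ => x + s) := measurableEmbedding_addRight s
  have pre : (fun x : ℝ => x + s) ⁻¹' (Set.Ioi s) = Set.Ioi 0 := by
    ext x
    simp
  have h1 := (mp.integrableOn_comp_preimage me).2 (int_g_aux (-s) s)
  have h2 := mp.setIntegral_preimage_emb me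
    (fun v : ℝ => (v + -s) * (1 / (1 + rexp (v / 2)))) (Set.Ioi s)
  rw [pre] at h1 h2
  simp only [add_neg_cancel_right, Function.comp_def] at h1 h2
  exact ⟨h1, h2⟩

theorem integral_x_H (t : ℝ) :
    IntegrableOn (fun x : ℝ => x * H x t) (Set.Ioi 0) ∧
    ∫ x in Set.Ioi (0 : ℝ), x * H x t = t ^ 2 / 2 + 2 * π ^ 2 / 3 := by
  obtain ⟨i1, e1⟩ := shift_aux t
  obtain ⟨i2, e2⟩ := shift_aux (-t)
  have e : (fun x : ℝ => x * H x t) = fun x => x * (1 / (1 + rexp ((x + t) / 2))) +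
      x * (1 / (1 + rexp ((x + -t) / 2))) := by
    funext x
    rw [H, mul_add, sub_eq_add_neg x t]
  rw [e]
  refine ⟨i1.add i2, ?_⟩
  rw [integral_add i1 i2, e1, e2, neg_neg,
    ← intervalIntegral.integral_interval_add_Ioi (int_g_aux (-t) t) (int_g_aux (-t) 0),
    ← intervalIntegral.integral_interval_add_Ioi (int_g_aux t (-t)) (int_g_aux t 0)]
  have hsum : (∫ v in Set.Ioi (0 : ℝ), (v + -t) * (1 / (1 + rexp (v / 2)))) +
      ∫ v in Set.Ioi (0 : ℝ), (v + t) * (1 / (1 + rexp (v / 2))) = 2 * (π ^ 2 / 3) := by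
    rw [← integral_add (int_g_aux (-t) 0) (int_g_aux t 0), ← base_aux, ← integral_const_mul]
    congr 1
    funext v
    ring
  have hneg : ∫ v in (-t)..0, (v + t) * (1 / (1 + rexp (v / 2))) =
      ∫ v in (0 : ℝ)..t, (-v + t) * (1 / (1 + rexp (-v / 2))) := by
    rw [intervalIntegral.integral_comp_neg
      (fun v : ℝ => (v + t) * (1 / (1 + rexp (v / 2)))), neg_zero]
  have hc (c : ℝ) : Continuous (fun v : ℝ => (v + c) * (1 / (1 + rexp (v / 2)))) :=
    (by fun_prop : Continuous fun v : ℝ => v + c).mul cont_g_aux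
  have hint : (∫ v in t..0, (v + -t) * (1 / (1 + rexp (v / 2)))) +
      ∫ v in (-t)..0, (v + t) * (1 / (1 + rexp (v / 2))) = t ^ 2 / 2 := by
    rw [hneg, intervalIntegral.integral_symm, ← intervalIntegral.integral_neg,
      ← intervalIntegral.integral_add (f := fun v : ℝ => -((v + -t) * (1 / (1 + rexp (v / 2)))))
        (g := fun v : ℝ => (-v + t) * (1 / (1 + rexp (-v / 2))))
        ((hc (-t)).neg.intervalIntegrable _ _)
        (((hc t).comp continuous_neg).intervalIntegrable _ _)]
    have : (fun v : ℝ => -((v + -t) * (1 / (1 + rexp (v / 2)))) +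
        (-v + t) * (1 / (1 + rexp (-v / 2)))) = fun v => t - v := by
      funext v
      rw [neg_div, Real.exp_neg]
      have := Real.exp_pos (v / 2)
      field_simp
      ring
    rw [this, intervalIntegral.integral_sub (by simp) (by simp)]
    simp
    ring
  linarith
end

section
/- For every real number t, the function x ↦ x³·H(x, t) is integrable on (0, ∞) and ∫₀^∞ x³ H(x, t) dx = t⁴/4 + 2π²t² + 28π⁴/15. -/
open Real MeasureTheory

/-- The Fermi factor. -/
noncomputable def fermi (u : ℝ) : ℝ := 1 / (1 + Real.exp (u / 2))

theorem fermi_cont : Continuous fermi := by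
  unfold fermi
  refine Continuous.div (by fun_prop) (by fun_prop) (fun x => by positivity)

theorem fermi_neg (u : ℝ) : fermi (-u) = 1 - fermi u := by
  unfold fermi
  rw [neg_div, Real.exp_neg]
  have := Real.exp_pos (u / 2)
  field_simp
  ring

theorem fermi_int_zero (k : ℕ) : IntegrableOn (fun u : ℝ => u ^ k * fermi u) (Set.Ioi 0) := by
  have h : IntegrableOn (fun u : ℝ => u ^ (k : ℝ) * Real.exp (-(1 / 2) * u ^ (1 : ℝ))) (Set.Ioi 0) :=
    integrableOn_rpow_mul_exp_neg_mul_rpow (by have : (0 : ℝ) ≤ k := by positivity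
                                               linarith) one_pos (by norm_num)
  refine Integrable.mono' h ?_ ?_
  · exact ((continuous_pow k).mul fermi_cont).aestronglyMeasurable
  · refine (ae_restrict_iff' measurableSet_Ioi).2 (Filter.Eventually.of_forall fun u hu => ?_)
    have hu : 0 < u := hu
    have hf : 0 < fermi u := by unfold fermi; positivity
    rw [Real.norm_of_nonneg (by positivity), Real.rpow_natCast, Real.rpow_one]
    gcongr
    unfold fermi
    rw [neg_mul, Real.exp_neg, one_div]
    gcongr
    rw [one_div, inv_mul_eq_div]
    linarith

theorem Ioi_of_zero {g : ℝ → ℝ} (hg : Continuous g) (h : IntegrableOn g (Set.Ioi 0)) (a : ℝ) :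
    IntegrableOn g (Set.Ioi a) := by
  have h2 : IntegrableOn g (Set.Icc a 0) := hg.integrableOn_Icc
  refine (h2.union h).mono_set fun x hx => ?_
  rcases le_or_gt x 0 with h | h
  · exact Or.inl ⟨le_of_lt hx, h⟩
  · exact Or.inr h

theorem fermi_hasSum (u : ℝ) (hu : 0 < u) :
    HasSum (fun n : ℕ => (-1 : ℝ) ^ n * Real.exp (-(((n : ℝ) + 1) / 2) * u)) (fermi u) := by
  have h := (hasSum_geometric_of_abs_lt_one (r := -Real.exp (-(u / 2))) (by
    rw [abs_neg, abs_of_pos (Real.exp_pos _), Real.exp_lt_one_iff]; linarith)).mul_right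
      (Real.exp (-(u / 2)))
  convert! h using 1
  · ext n
    rw [neg_pow (Real.exp _), ← Real.exp_nat_mul, mul_assoc, ← Real.exp_add]
    congr 2
    ring
  · unfold fermi
    rw [Real.exp_neg, sub_neg_eq_add]
    have := Real.exp_pos (u / 2)
    field_simp
    ring

theorem moment_hasSum (k : ℕ) (hk : 1 ≤ k) :
    HasSum (fun n : ℕ => (k.factorial : ℝ) * (-1) ^ n / (((n : ℝ) + 1) / 2) ^ (k + 1))
      (∫ u in Set.Ioi (0 : ℝ), u ^ k * fermi u) := by
  have h := hasSum_mellin (a := fun n : ℕ => ((-1 : ℝ) ^ n : ℂ)) (p := fun n : ℕ => ((n : ℝ) + 1) / 2)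
    (F := fun u => (fermi u : ℂ)) (s := (k : ℂ) + 1) (fun n => Or.inr (by positivity))
    (by simp; positivity)
    (fun u hu => by
      have := Complex.hasSum_ofReal.2 (fermi_hasSum u hu)
      convert! this using 2
      push_cast
      rfl)
    (by
      have h1 : Summable (fun n : ℕ => 1 / ((n : ℝ)) ^ (k + 1)) :=
        Real.summable_one_div_nat_pow.2 (by omega)
      have h2 := ((summable_nat_add_iff 1).2 h1).mul_left ((2 : ℝ) ^ (k + 1))
      convert! h2 using 1
      ext n
      have : ((k : ℂ) + 1).re = ((k + 1 : ℕ) : ℝ) := by simp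
      rw [this, Real.rpow_natCast, div_pow]
      simp [div_eq_mul_inv])
  rw [← Complex.hasSum_ofReal]
  convert! h using 1
  · ext n
    rw [Complex.Gamma_nat_eq_factorial]
    have : ((k : ℂ) + 1) = ((k + 1 : ℕ) : ℂ) := by simp
    rw [this, Complex.cpow_natCast]
    push_cast
    rfl
  · rw [mellin, ← integral_complex_ofReal]
    refine setIntegral_congr_fun measurableSet_Ioi fun u hu => ?_
    simp

theorem alt_sum (m : ℕ) (z : ℝ) (hm : m ≠ 0) (hz : HasSum (fun n : ℕ => (1 : ℝ) / (n : ℝ) ^ m) z) :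
    HasSum (fun n : ℕ => (-1 : ℝ) ^ n / ((n : ℝ) + 1) ^ m) (z - 2 * (z / 2 ^ m)) := by
  have he : HasSum (fun n : ℕ => (1 : ℝ) / ((2 * n : ℕ) : ℝ) ^ m) (z / 2 ^ m) := by
    convert! hz.div_const (2 ^ m) using 1
    ext n
    push_cast
    rw [mul_pow, div_div, mul_comm]
  have hs := hz.summable
  have ho : Summable (fun n : ℕ => (1 : ℝ) / ((2 * n + 1 : ℕ) : ℝ) ^ m) :=
    hs.comp_injective (i := fun n : ℕ => 2 * n + 1) (fun a b h => by simpa using h)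
  have hsum := HasSum.even_add_odd (f := fun n : ℕ => (1 : ℝ) / (n : ℝ) ^ m) he ho.hasSum
  have e := hsum.unique hz
  have ho' := ho.hasSum
  rw [show (∑' n : ℕ, (1 : ℝ) / ((2 * n + 1 : ℕ) : ℝ) ^ m) = z - z / 2 ^ m by linarith] at ho'
  have hd := HasSum.even_add_odd (f := fun n : ℕ => -(-1 : ℝ) ^ n / (n : ℝ) ^ m)
    (m := -(z / 2 ^ m)) (m' := z - z / 2 ^ m)
    (by convert! he.neg using 1; ext n; simp [neg_div]) (by convert! ho' using 1; ext n; simp [pow_succ])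
  rw [← hasSum_nat_add_iff' 1] at hd
  convert! hd using 1
  · ext n
    simp [pow_succ]
  · simp [hm]; ring

theorem moment_one : ∫ u in Set.Ioi (0 : ℝ), u ^ 1 * fermi u = π ^ 2 / 3 := by
  refine (moment_hasSum 1 le_rfl).unique ?_
  convert! (alt_sum 2 _ (by norm_num) hasSum_zeta_two).mul_left 4 using 1
  · ext n
    simp
    field_simp
    ring
  · ring

theorem moment_three : ∫ u in Set.Ioi (0 : ℝ), u ^ 3 * fermi u = 14 * π ^ 4 / 15 := by
  refine (moment_hasSum 3 (by norm_num)).unique ?_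
  convert! (alt_sum 4 _ (by norm_num) hasSum_zeta_four).mul_left (6 * 16) using 1
  · ext n
    simp [Nat.factorial]
    field_simp
    ring
  · ring

theorem shifted_int_zero (t : ℝ) :
    IntegrableOn (fun u : ℝ => (u - t) ^ 3 * fermi u) (Set.Ioi 0) := by
  have := (((fermi_int_zero 3).sub ((fermi_int_zero 2).const_mul (3 * t))).add
    ((fermi_int_zero 1).const_mul (3 * t ^ 2))).sub ((fermi_int_zero 0).const_mul (t ^ 3))
  refine this.congr (Filter.Eventually.of_forall fun u => ?_)
  simp only [Pi.add_apply, Pi.sub_apply]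
  ring

theorem shifted_cont (t : ℝ) : Continuous (fun u : ℝ => (u - t) ^ 3 * fermi u) :=
  Continuous.mul (by fun_prop) fermi_cont

theorem half_integral (t : ℝ) :
    IntegrableOn (fun x : ℝ => x ^ 3 * fermi (x + t)) (Set.Ioi 0) ∧
    ∫ x in Set.Ioi (0 : ℝ), x ^ 3 * fermi (x + t) =
      (∫ u in Set.Ioi (0 : ℝ), (u - t) ^ 3 * fermi u) - ∫ u in (0 : ℝ)..t, (u - t) ^ 3 * fermi u := by
  have mp := measurePreserving_add_right (volume : Measure ℝ) t
  have me := measurableEmbedding_addRight t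
  have hpre : (fun x : ℝ => x + t) ⁻¹' Set.Ioi t = Set.Ioi 0 := by
    ext x; simp
  have hi := Ioi_of_zero (shifted_cont t) (shifted_int_zero t) t
  constructor
  · have := (mp.integrableOn_comp_preimage me).2 hi
    rw [hpre] at this
    refine this.congr (Filter.Eventually.of_forall fun u => ?_)
    simp
  · have h1 := mp.setIntegral_preimage_emb me (fun u : ℝ => (u - t) ^ 3 * fermi u) (Set.Ioi t)
    rw [hpre] at h1
    simp only [add_sub_cancel_right] at h1
    rw [h1, ← intervalIntegral.integral_Ioi_sub_Ioi' (shifted_int_zero t) hi]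
    ring

theorem interval_part (t : ℝ) :
    (∫ u in (0 : ℝ)..t, (u - t) ^ 3 * fermi u) + (∫ u in (0 : ℝ)..(-t), (u - -t) ^ 3 * fermi u)
      = -(t ^ 4 / 4) := by
  have h := intervalIntegral.integral_comp_neg (a := 0) (b := t)
    (fun u : ℝ => (u - -t) ^ 3 * fermi u)
  rw [neg_zero] at h
  have hc : Continuous (fun u : ℝ => (-u - -t) ^ 3 * fermi (-u)) :=
    (shifted_cont (-t)).comp continuous_neg
  rw [intervalIntegral.integral_symm (-t) 0, ← h, ← sub_eq_add_neg,
    ← intervalIntegral.integral_sub ((shifted_cont t).intervalIntegrable _ _)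
      (hc.intervalIntegrable _ _)]
  have : ∀ u : ℝ, (u - t) ^ 3 * fermi u - (-u - -t) ^ 3 * fermi (-u) = (u - t) ^ 3 := by
    intro u
    rw [fermi_neg]
    ring
  simp only [this]
  rw [intervalIntegral.integral_comp_sub_right (fun u : ℝ => u ^ 3), integral_pow]
  norm_num
  ring

theorem main_part (t : ℝ) :
    (∫ u in Set.Ioi (0 : ℝ), (u - t) ^ 3 * fermi u) + (∫ u in Set.Ioi (0 : ℝ), (u - -t) ^ 3 * fermi u)
      = 2 * (14 * π ^ 4 / 15) + 6 * t ^ 2 * (π ^ 2 / 3) := by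
  rw [← integral_add (shifted_int_zero t) (shifted_int_zero (-t)), ← moment_one, ← moment_three,
    ← integral_const_mul, ← integral_const_mul,
    ← integral_add ((fermi_int_zero 3).const_mul _) ((fermi_int_zero 1).const_mul _)]
  congr 1
  ext u
  ring

theorem integral_x3_H (t : ℝ) :
    IntegrableOn (fun x : ℝ => x ^ 3 * H x t) (Set.Ioi 0) ∧
    ∫ x in Set.Ioi (0 : ℝ), x ^ 3 * H x t =
      t ^ 4 / 4 + 2 * π ^ 2 * t ^ 2 + 28 * π ^ 4 / 15 := by
  obtain ⟨i1, e1⟩ := half_integral t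
  obtain ⟨i2, e2⟩ := half_integral (-t)
  have hH : (fun x : ℝ => x ^ 3 * H x t) =
      fun x => x ^ 3 * fermi (x + t) + x ^ 3 * fermi (x + -t) := by
    ext x
    unfold H fermi
    rw [← sub_eq_add_neg]
    ring
  rw [hH]
  refine ⟨i1.add i2, ?_⟩
  rw [integral_add i1 i2, e1, e2]
  linarith [main_part t, interval_part t]
end

section
/- For all real numbers L₁ and L₂: ∫₀^∞ ∫₀^∞ x y H(x+y, L₁) dx dy + ∫₀^∞ x·(H(x, L₁+L₂) + H(x, L₁−L₂))·(x² + 4π²)/48 dx = 5L₁⁴/96 + L₁²L₂²/16 + L₂⁴/96 + π²L₁²/2 + π²L₂²/6 + π⁴/2. (This is the instance of Mirzakhani's recursion computing 2·∂/∂L₁ (L₁·V_{1,2}(L₁, L₂)) from V_{0,3} = 1 and V_{1,1}(x) = (x² + 4π²)/48.) -/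
open Real MeasureTheory

noncomputable def fs (x : ℝ) : ℝ := 1 / (1 + Real.exp (x / 2))

lemma H_eq (x t : ℝ) : H x t = fs (x + t) + fs (x - t) := rfl

lemma fs_cont : Continuous fs := by
  unfold fs
  refine Continuous.div (by fun_prop) (by fun_prop) (fun x => by positivity)

lemma fs_nonneg (x : ℝ) : 0 ≤ fs x := by unfold fs; positivity

lemma fs_le (x : ℝ) : fs x ≤ Real.exp (-x / 2) := by
  unfold fs
  rw [neg_div, Real.exp_neg, ← one_div]
  exact one_div_le_one_div_of_le (Real.exp_pos _) (by linarith)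

lemma fs_neg (x : ℝ) : fs (-x) = 1 - fs x := by
  unfold fs
  rw [neg_div, Real.exp_neg]
  have := Real.exp_pos (x / 2)
  field_simp
  ring

lemma fs_int (n : ℕ) (c d a : ℝ) :
    IntegrableOn (fun x => (x + c) ^ n * fs (x + d)) (Set.Ioi a) := by
  have hc := fs_cont
  refine integrable_of_isBigO_exp_neg (b := 1 / 4) (by norm_num) (by fun_prop) ?_
  have h1 : (fun x : ℝ => (x + c) ^ n) =O[Filter.atTop] fun x => Real.exp (1 / 4 * x) := by
    have h := (isLittleO_pow_exp_pos_mul_atTop n (b := 1 / 4) (by norm_num)).isBigO.comp_tendsto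
      (Filter.tendsto_atTop_add_const_right Filter.atTop c Filter.tendsto_id)
    refine h.trans ?_
    refine Asymptotics.IsBigO.of_bound (Real.exp (1 / 4 * c)) (Filter.Eventually.of_forall ?_)
    intro x
    simp only [Function.comp, id, Real.norm_eq_abs, Real.abs_exp]
    rw [← Real.exp_add]
    exact le_of_eq (by ring_nf)
  have h2 : (fun x : ℝ => fs (x + d)) =O[Filter.atTop] fun x => Real.exp (-x / 2) := by
    refine Asymptotics.IsBigO.of_bound (Real.exp (-d / 2)) (Filter.Eventually.of_forall ?_)
    intro x
    simp only [Real.norm_eq_abs, Real.abs_exp]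
    rw [abs_of_nonneg (fs_nonneg _), ← Real.exp_add]
    exact (fs_le _).trans (le_of_eq (by ring_nf))
  refine (h1.mul h2).congr_right (fun x => ?_)
  rw [← Real.exp_add]; ring_nf

lemma fs_int0 (n : ℕ) (c a : ℝ) :
    IntegrableOn (fun x => (x + c) ^ n * fs x) (Set.Ioi a) := by
  simpa using fs_int n c 0 a

lemma shift (f : ℝ → ℝ) (t : ℝ) :
    ∫ x in Set.Ioi (0 : ℝ), f (x + t) = ∫ x in Set.Ioi t, f x := by
  have := (measurePreserving_add_right volume t).setIntegral_preimage_emb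
    (measurableEmbedding_addRight t) f (Set.Ioi t)
  simpa using this

lemma F_odd (n : ℕ) (hn : Odd n) (t : ℝ) :
    ∫ x in Set.Ioi (0 : ℝ), x ^ n * H x t = t ^ (n + 1) / (n + 1) +
      ((∫ x in Set.Ioi (0 : ℝ), (x + -t) ^ n * fs x) +
       ∫ x in Set.Ioi (0 : ℝ), (x + t) ^ n * fs x) := by
  have hc := fs_cont
  have e1 : ∫ x in Set.Ioi (0 : ℝ), x ^ n * H x t =
      (∫ x in Set.Ioi (0 : ℝ), x ^ n * fs (x + t)) + ∫ x in Set.Ioi (0 : ℝ), x ^ n * fs (x + -t) := by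
    rw [← integral_add (by simpa [IntegrableOn] using fs_int n 0 t 0)
      (by simpa [IntegrableOn] using fs_int n 0 (-t) 0)]
    congr 1; ext x; rw [H_eq]; ring_nf
  have e2 := shift (fun x => (x + -t) ^ n * fs x) t
  have e3 := shift (fun x => (x + t) ^ n * fs x) (-t)
  simp only [add_neg_cancel_right, neg_add_cancel_right] at e2 e3
  have e4 := intervalIntegral.integral_interval_add_Ioi (fs_int0 n (-t) 0) (fs_int0 n (-t) t)
  have e5 := intervalIntegral.integral_interval_add_Ioi (fs_int0 n t (-t)) (fs_int0 n t 0)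
  have e6 : ∫ x in (-t)..0, (x + t) ^ n * fs x = ∫ x in (0:ℝ)..t, (t - x) ^ n * (1 - fs x) := by
    have := intervalIntegral.integral_comp_neg (a := 0) (b := t) (fun x => (x + t) ^ n * fs x)
    rw [neg_zero] at this
    rw [← this]
    congr 1; ext x; rw [fs_neg]; ring_nf
  have e7 : ∫ x in (0:ℝ)..t, (t - x) ^ n * (1 - fs x) =
      (∫ x in (0:ℝ)..t, (t - x) ^ n) + ∫ x in (0:ℝ)..t, (x + -t) ^ n * fs x := by
    rw [← intervalIntegral.integral_add (Continuous.intervalIntegrable (by fun_prop) _ _)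
      (Continuous.intervalIntegrable (by fun_prop) _ _)]
    congr 1; ext x
    have : (x + -t) ^ n = - (t - x) ^ n := by rw [← hn.neg_pow]; ring_nf
    rw [this]; ring
  have e8 : ∫ x in (0:ℝ)..t, (t - x) ^ n = t ^ (n + 1) / (n + 1) := by
    rw [intervalIntegral.integral_comp_sub_left (fun x => x ^ n) t]
    simp
  rw [e1, e2, e3, ← e5, e6, e7, e8]
  linarith

lemma eta {p : ℕ} {Z : ℝ} (hp : p ≠ 0) (h : HasSum (fun n : ℕ => (1 : ℝ) / (n : ℝ) ^ p) Z) :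
    HasSum (fun n : ℕ => (-1 : ℝ) ^ n / ((n : ℝ) + 1) ^ p) ((1 - 2 / 2 ^ p) * Z) := by
  have he : HasSum (fun n : ℕ => (1 : ℝ) / ((2 * n : ℕ) : ℝ) ^ p) (1 / 2 ^ p * Z) := by
    refine (h.mul_left (1 / 2 ^ p)).congr_fun ?_
    intro n
    push_cast
    rw [mul_pow, div_mul_div_comm, one_mul]
  have ho : HasSum (fun n : ℕ => (1 : ℝ) / ((2 * n + 1 : ℕ) : ℝ) ^ p) (Z - 1 / 2 ^ p * Z) := by
    have hs : Summable (fun n : ℕ => (1 : ℝ) / ((2 * n + 1 : ℕ) : ℝ) ^ p) :=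
      h.summable.comp_injective (i := fun n => 2 * n + 1) (fun a b hab => by simpa using hab)
    have := HasSum.even_add_odd (f := fun n : ℕ => (1 : ℝ) / (n : ℝ) ^ p) he hs.hasSum
    have h2 := this.unique h
    rw [← eq_sub_of_add_eq' h2]
    exact hs.hasSum
  have hb : HasSum (fun n : ℕ => (-1 : ℝ) ^ (n + 1) / (n : ℝ) ^ p)
      (-(1 / 2 ^ p * Z) + (Z - 1 / 2 ^ p * Z)) := by
    refine HasSum.even_add_odd ?_ ?_
    · refine he.neg.congr_fun ?_
      intro n
      rw [pow_succ, pow_mul]; simp [neg_div]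
    · refine ho.congr_fun ?_
      intro n
      rw [pow_succ, pow_succ, pow_mul]; simp
  have := (hasSum_nat_add_iff' 1).2 hb
  simp only [Finset.sum_range_one, Nat.cast_zero, zero_pow hp, div_zero, sub_zero] at this
  have hv : (1 - 2 / 2 ^ p) * Z = -(1 / 2 ^ p * Z) + (Z - 1 / 2 ^ p * Z) := by ring
  rw [hv]
  refine this.congr_fun ?_
  intro n
  rw [pow_succ (-1 : ℝ), pow_succ (-1 : ℝ)]; push_cast; simp

lemma expint (k : ℕ) {b : ℝ} (hb : 0 < b) :
    IntegrableOn (fun x : ℝ => x ^ k * Real.exp (-(b * x))) (Set.Ioi 0) ∧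
    ∫ x in Set.Ioi (0 : ℝ), x ^ k * Real.exp (-(b * x)) = k.factorial / b ^ (k + 1) := by
  constructor
  · have := integrableOn_rpow_mul_exp_neg_mul_rpow (s := k) (p := 1) (b := b) (by
      have : (0:ℝ) ≤ k := by positivity
      linarith) one_pos hb
    simpa using this
  · have := Real.integral_rpow_mul_exp_neg_mul_Ioi (a := (k : ℝ) + 1) (by positivity) hb
    simp only [add_sub_cancel_right, Real.rpow_natCast] at this
    rw [this, Real.Gamma_nat_eq_factorial]
    rw [show (k : ℝ) + 1 = ((k + 1 : ℕ) : ℝ) by push_cast; ring, Real.rpow_natCast,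
      one_div, inv_pow, div_eq_inv_mul]


lemma fermi_s15 (k : ℕ) (hk : k ≠ 0) {Z : ℝ}
    (h : HasSum (fun n : ℕ => (1 : ℝ) / (n : ℝ) ^ (k + 1)) Z) :
    ∫ x in Set.Ioi (0 : ℝ), x ^ k * fs x =
      k.factorial * 2 ^ (k + 1) * ((1 - 2 / 2 ^ (k + 1)) * Z) := by
  have hb : ∀ n : ℕ, (0 : ℝ) < ((n : ℝ) + 1) / 2 := fun n => by positivity
  have h1 := hasSum_integral_of_summable_integral_norm (μ := volume.restrict (Set.Ioi (0 : ℝ)))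
    (F := fun (n : ℕ) (x : ℝ) =>
      (-1 : ℝ) ^ n * (x ^ k * Real.exp (-(((n : ℝ) + 1) / 2 * x))))
    (fun n => (expint k (hb n)).1.const_mul _) ?_
  · have h2 : ∫ x in Set.Ioi (0 : ℝ), x ^ k * fs x = ∫ x in Set.Ioi (0 : ℝ),
        ∑' n : ℕ, (-1 : ℝ) ^ n * (x ^ k * Real.exp (-(((n : ℝ) + 1) / 2 * x))) := by
      refine setIntegral_congr_fun measurableSet_Ioi ?_
      intro x hx
      have hx : 0 < x := hx
      have hr : |(-Real.exp (-(x / 2)))| < 1 := by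
        rw [abs_neg, Real.abs_exp, Real.exp_lt_one_iff]; linarith
      have hg := (hasSum_geometric_of_abs_lt_one hr).mul_left (x ^ k * Real.exp (-(x / 2)))
      dsimp only
      have hg2 : HasSum (fun n : ℕ =>
          (-1 : ℝ) ^ n * (x ^ k * Real.exp (-(((n : ℝ) + 1) / 2 * x))))
          (x ^ k * Real.exp (-(x / 2)) * (1 - -Real.exp (-(x / 2)))⁻¹) := by
        refine hg.congr_fun ?_
        intro n
        rw [neg_pow (Real.exp _), ← Real.exp_nat_mul,
          show -(((n : ℝ) + 1) / 2 * x) = -(x / 2) + n * -(x / 2) by ring, Real.exp_add]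
        ring
      rw [hg2.tsum_eq]
      unfold fs
      rw [Real.exp_neg]
      have := Real.exp_pos (x / 2)
      rw [sub_neg_eq_add]
      have h3 : 1 + (Real.exp (x / 2))⁻¹ ≠ 0 := by positivity
      field_simp
      try ring
    rw [h2]
    refine h1.unique ?_
    refine ((eta (Nat.succ_ne_zero k) h).mul_left ((k.factorial : ℝ) * 2 ^ (k + 1))).congr_fun ?_
    intro n
    rw [integral_const_mul, (expint k (hb n)).2, div_pow]
    field_simp
  · have hs := (((summable_nat_add_iff 1).2 h.summable).mul_left ((k.factorial : ℝ) * 2 ^ (k + 1)))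
    refine hs.congr ?_
    intro n
    have : ∀ x ∈ Set.Ioi (0 : ℝ), ‖(-1 : ℝ) ^ n * (x ^ k * Real.exp (-(((n : ℝ) + 1) / 2 * x)))‖
        = x ^ k * Real.exp (-(((n : ℝ) + 1) / 2 * x)) := by
      intro x hx
      have hx : 0 < x := hx
      rw [norm_mul, norm_pow, norm_neg, norm_one, one_pow, one_mul, Real.norm_eq_abs,
        abs_of_nonneg (by positivity)]
    rw [setIntegral_congr_fun measurableSet_Ioi this, (expint k (hb n)).2, div_pow]
    push_cast
    field_simp

lemma A1 : ∫ x in Set.Ioi (0 : ℝ), x * fs x = π ^ 2 / 3 := by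
  have := fermi_s15 1 one_ne_zero hasSum_zeta_two
  simp only [pow_one] at this
  rw [this]; norm_num [Nat.factorial]; ring

lemma A3 : ∫ x in Set.Ioi (0 : ℝ), x ^ 3 * fs x = 14 * π ^ 4 / 15 := by
  rw [fermi_s15 3 (by norm_num) hasSum_zeta_four]; norm_num [Nat.factorial]; ring

lemma F1 (t : ℝ) : ∫ x in Set.Ioi (0 : ℝ), x ^ 1 * H x t = t ^ 2 / 2 + 2 * π ^ 2 / 3 := by
  rw [F_odd 1 odd_one, ← integral_add (fs_int0 _ _ _) (fs_int0 _ _ _)]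
  have : ∀ x : ℝ, (x + -t) ^ 1 * fs x + (x + t) ^ 1 * fs x = 2 * (x * fs x) := fun x => by ring
  simp only [this]
  rw [integral_const_mul, A1]
  push_cast; ring

lemma F3 (t : ℝ) : ∫ x in Set.Ioi (0 : ℝ), x ^ 3 * H x t =
    t ^ 4 / 4 + 2 * π ^ 2 * t ^ 2 + 28 * π ^ 4 / 15 := by
  rw [F_odd 3 (by decide), ← integral_add (fs_int0 _ _ _) (fs_int0 _ _ _)]
  have : ∀ x : ℝ, (x + -t) ^ 3 * fs x + (x + t) ^ 3 * fs x =
    2 * (x ^ 3 * fs x) + 6 * t ^ 2 * (x * fs x) := fun x => by ring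
  simp only [this]
  rw [integral_add, integral_const_mul, integral_const_mul, A1, A3]
  · push_cast; ring
  · exact Integrable.const_mul (by simpa [IntegrableOn] using fs_int0 3 0 0) _
  · exact Integrable.const_mul (by simpa [IntegrableOn] using fs_int0 1 0 0) _

lemma H_int (n : ℕ) (t : ℝ) : IntegrableOn (fun x => x ^ n * H x t) (Set.Ioi 0) := by
  have h1 := fs_int n 0 t 0
  have h2 := fs_int n 0 (-t) 0
  refine (h1.add h2).congr (Filter.Eventually.of_forall fun x => ?_)
  simp only [Pi.add_apply, H_eq, sub_eq_add_neg, add_zero]; ring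

lemma H_cont (t : ℝ) : Continuous (fun x => H x t) := by
  have hc := fs_cont
  simp only [H_eq]; fun_prop

lemma H_nonneg (x t : ℝ) : 0 ≤ H x t := add_nonneg (fs_nonneg (x + t)) (fs_nonneg (x - t))

lemma H_le (x t : ℝ) :
    H x t ≤ (Real.exp (-t / 2) + Real.exp (t / 2)) * Real.exp (-(1 / 2 * x)) := by
  rw [H_eq]
  refine (add_le_add (fs_le _) (fs_le _)).trans (le_of_eq ?_)
  rw [add_mul, ← Real.exp_add, ← Real.exp_add]; ring_nf

lemma dbl (t : ℝ) :
    ∫ x in Set.Ioi (0 : ℝ), ∫ y in Set.Ioi (0 : ℝ), x * y * H (x + y) t =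
      (∫ z in Set.Ioi (0 : ℝ), z ^ 3 * H z t) / 6 := by
  have hH := H_cont t
  set f : ℝ × ℝ → ℝ := (Set.Ioi (0 : ℝ) ×ˢ Set.Ioi (0 : ℝ)).indicator
    (fun p => p.1 * p.2 * H (p.1 + p.2) t) with hf
  have hcont : Continuous (fun p : ℝ × ℝ => p.1 * p.2 * H (p.1 + p.2) t) :=
    (by fun_prop : Continuous fun p : ℝ × ℝ => p.1 * p.2).mul
      (hH.comp (by fun_prop : Continuous fun p : ℝ × ℝ => p.1 + p.2))
  have hms : MeasurableSet (Set.Ioi (0 : ℝ) ×ˢ Set.Ioi (0 : ℝ)) :=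
    measurableSet_Ioi.prod measurableSet_Ioi
  have hfi : Integrable f (volume.prod volume) := by
    rw [hf, integrable_indicator_iff hms, IntegrableOn, ← Measure.prod_restrict]
    have hb := (expint 1 (b := 1 / 2) (by norm_num)).1
    have hd := (hb.mul_prod hb).const_mul (Real.exp (-t / 2) + Real.exp (t / 2))
    refine hd.mono' hcont.aestronglyMeasurable ?_
    rw [Measure.prod_restrict]
    filter_upwards [ae_restrict_mem hms] with p hp
    have h1 : 0 < p.1 := hp.1
    have h2 : 0 < p.2 := hp.2
    have h0 := H_nonneg (p.1 + p.2) t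
    rw [Real.norm_eq_abs, abs_of_nonneg (by positivity)]
    refine (mul_le_mul_of_nonneg_left (H_le _ _) (by positivity)).trans (le_of_eq ?_)
    rw [mul_add (1 / 2 : ℝ), neg_add, Real.exp_add]
    ring
  have hgi : Integrable (fun p : ℝ × ℝ => f (p.1, -p.1 + p.2)) (volume.prod volume) :=
    (measurePreserving_prod_neg_add (volume : Measure ℝ) (volume : Measure ℝ)).integrable_comp_of_integrable hfi
  have l1 : ∫ x in Set.Ioi (0 : ℝ), ∫ y in Set.Ioi (0 : ℝ), x * y * H (x + y) t =
      ∫ x, ∫ y, f (x, y) := by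
    rw [← integral_indicator measurableSet_Ioi]
    congr 1; ext x
    by_cases hx : x ∈ Set.Ioi (0 : ℝ)
    · rw [Set.indicator_of_mem hx, ← integral_indicator measurableSet_Ioi]
      congr 1; ext y
      by_cases hy : y ∈ Set.Ioi (0 : ℝ)
      · rw [Set.indicator_of_mem hy, hf, Set.indicator_of_mem (Set.mk_mem_prod hx hy)]
      · rw [Set.indicator_of_notMem hy, hf, Set.indicator_of_notMem (fun h => hy h.2)]
    · rw [Set.indicator_of_notMem hx]
      have : ∀ y, f (x, y) = 0 := fun y => Set.indicator_of_notMem (fun h => hx h.1) _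
      simp [this]
  have l2 : ∀ x, ∫ y, f (x, y) = ∫ z, f (x, -x + z) := fun x =>
    (integral_add_left_eq_self (fun z => f (x, z)) (-x)).symm
  rw [l1]
  simp only [l2]
  rw [integral_integral_swap (f := fun x z => f (x, -x + z)) hgi, ← integral_div,
    ← integral_indicator measurableSet_Ioi]
  congr 1; ext z
  have l3 : ∀ x, f (x, -x + z) = (Set.Ioo 0 z).indicator (fun x => (x * (z - x)) * H z t) x := by
    intro x
    by_cases hx : x ∈ Set.Ioo 0 z
    · have hm : (x, -x + z) ∈ Set.Ioi (0 : ℝ) ×ˢ Set.Ioi (0 : ℝ) := by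
        have := hx.2
        refine ⟨hx.1, ?_⟩
        change 0 < -x + z
        linarith
      rw [Set.indicator_of_mem hx, hf, Set.indicator_of_mem hm]
      dsimp only
      ring_nf
    · rw [Set.indicator_of_notMem hx, hf, Set.indicator_of_notMem]
      intro h
      have h2 := h.2
      simp at h2
      exact hx ⟨h.1, by linarith⟩
  simp only [l3]
  rw [integral_indicator measurableSet_Ioo]
  by_cases hz : z ∈ Set.Ioi (0 : ℝ)
  · rw [Set.indicator_of_mem hz, integral_mul_const, ← integral_Ioc_eq_integral_Ioo,
      ← intervalIntegral.integral_of_le (le_of_lt hz)]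
    have : ∫ x in (0:ℝ)..z, x * (z - x) = z ^ 3 / 6 := by
      have e : ∀ x : ℝ, x * (z - x) = z * x - x ^ 2 := fun x => by ring
      simp only [e]
      rw [intervalIntegral.integral_sub (Continuous.intervalIntegrable (by fun_prop) _ _)
        (Continuous.intervalIntegrable (by fun_prop) _ _), intervalIntegral.integral_const_mul,
        integral_id, integral_pow]
      push_cast; ring
    rw [this]; ring
  · rw [Set.indicator_of_notMem hz, Set.Ioo_eq_empty hz]; simp

theorem mirzakhani_recursion_V12 (L₁ L₂ : ℝ) :
    (∫ x in Set.Ioi (0 : ℝ), ∫ y in Set.Ioi (0 : ℝ), x * y * H (x + y) L₁) +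
      ∫ x in Set.Ioi (0 : ℝ),
        x * (H x (L₁ + L₂) + H x (L₁ - L₂)) * (x ^ 2 + 4 * π ^ 2) / 48 =
    5 * L₁ ^ 4 / 96 + L₁ ^ 2 * L₂ ^ 2 / 16 + L₂ ^ 4 / 96 +
      π ^ 2 * L₁ ^ 2 / 2 + π ^ 2 * L₂ ^ 2 / 6 + π ^ 4 / 2 := by
  have e : ∀ x : ℝ, x * (H x (L₁ + L₂) + H x (L₁ - L₂)) * (x ^ 2 + 4 * π ^ 2) / 48 =
      (1 / 48) * ((x ^ 3 * H x (L₁ + L₂) + x ^ 3 * H x (L₁ - L₂)) +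
        (4 * π ^ 2) * (x ^ 1 * H x (L₁ + L₂) + x ^ 1 * H x (L₁ - L₂))) := fun x => by ring
  simp only [e]
  have i3 : Integrable (fun x => x ^ 3 * H x (L₁ + L₂) + x ^ 3 * H x (L₁ - L₂))
      (volume.restrict (Set.Ioi 0)) := (H_int 3 _).add (H_int 3 _)
  have i1 : Integrable (fun x => x ^ 1 * H x (L₁ + L₂) + x ^ 1 * H x (L₁ - L₂))
      (volume.restrict (Set.Ioi 0)) := (H_int 1 _).add (H_int 1 _)
  rw [dbl, integral_const_mul, integral_add i3 (i1.const_mul _), integral_const_mul,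
    integral_add (H_int 3 _) (H_int 3 _), integral_add (H_int 1 _) (H_int 1 _),
    F1, F1, F3, F3, F3]
  ring
end
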